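/- Let d_C ≥ 1 and d₁, d₂ ≥ 1 with d₁·d₂ ≥ 2. Let ψ be a complex positive semidefinite matrix of trace 1 acting on ℂ^{d_C} ⊗ ℂ^{d₁} ⊗ ℂ^{d₂}, and let ψ_C denote its partial trace over the second and third factors. Equip the unitary group U(d₁d₂) with its Haar probability measure, and for U ∈ U(d₁d₂) define σ(U)^{CA₂} := Tr_{A₁}[(1_{d_C} ⊗ U) ψ (1_{d_C} ⊗ U)*], the partial trace of the conjugated state over the middle factor ℂ^{d₁}. Then ∫_{U(d₁d₂)} Tr[(σ(U)^{CA₂})²] dU = Tr(ψ_C²)/d₂ + (d₂² − 1)·(d₁d₂·Tr(ψ²) − Tr(ψ_C²)) / (d₂·((d₁d₂)² − 1)). -/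

import Mathlib

open MeasureTheory Matrix Kronecker
open scoped ComplexOrder

/-- The state of the reference `C` and the remaining black hole `A₂` after the black hole
dynamics `U`: partial trace over the emitted radiation `A₁` of `(1 ⊗ U) ψ (1 ⊗ U)*`. -/
noncomputable def sigmaCA2 {dC d₁ d₂ : ℕ}
    (ψ : Matrix (Fin dC × (Fin d₁ × Fin d₂)) (Fin dC × (Fin d₁ × Fin d₂)) ℂ)
    (U : Matrix.unitaryGroup (Fin d₁ × Fin d₂) ℂ) :
    Matrix (Fin dC × Fin d₂) (Fin dC × Fin d₂) ℂ :=
  Matrix.of fun p q => ∑ a₁ : Fin d₁,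
    (((1 : Matrix (Fin dC) (Fin dC) ℂ) ⊗ₖ (U : Matrix (Fin d₁ × Fin d₂) (Fin d₁ × Fin d₂) ℂ))
        * ψ *
      ((1 : Matrix (Fin dC) (Fin dC) ℂ) ⊗ₖ (U : Matrix (Fin d₁ × Fin d₂) (Fin d₁ × Fin d₂) ℂ))ᴴ)
      (p.1, (a₁, p.2)) (q.1, (a₁, q.2))

/-- Partial trace over the second and third tensor factors. -/
noncomputable def ptraceC {dC d₁ d₂ : ℕ}
    (ψ : Matrix (Fin dC × (Fin d₁ × Fin d₂)) (Fin dC × (Fin d₁ × Fin d₂)) ℂ) :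
    Matrix (Fin dC) (Fin dC) ℂ :=
  Matrix.of fun c c' => ∑ a : Fin d₁ × Fin d₂, ψ (c, a) (c', a)


/-!
Write `ρ(U) = U ⊗ U` and let `S` flip the two copies of `A₂` in `(A₁ ⊗ A₂) ⊗ (A₁ ⊗ A₂)`. By the
swap trick the purity of `σ(U)^{CA₂}` is `Tr[ρ(U) X ρ(U)* S]`, where `X` is obtained from
`(ψ ⊗ ψ) (F_C ⊗ 1)` by tracing out both copies of `C`. Averaging replaces `ρ(U) X ρ(U)*` by the
twirl of `X`, which commutes with every `U ⊗ U` and hence is a combination of `1` and the flip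
`F`. The two coefficients are determined by the traces of `X` and `X F`, which are the purities
of `ψ^C` and of `ψ`.
-/

section Twirl

variable {G A : Type*} [MeasurableSpace G] [NormedRing A] [StarRing A]

lemma integrable_unitary_conj [CStarRing A] [TopologicalSpace G] [OpensMeasurableSpace G]
    [SecondCountableTopologyEither G A] (μ : Measure G) [IsFiniteMeasure μ] {ρ : G → unitary A}
    (hρ : Continuous ρ) (x : A) :
    Integrable (fun g => (ρ g : A) * x * star (ρ g : A)) μ := by
  refine .of_bound (Continuous.aestronglyMeasurable (by fun_prop)) ‖x‖ (.of_forall fun g => ?_)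
  rw [← Unitary.coe_star, CStarRing.norm_mul_coe_unitary, CStarRing.norm_coe_unitary_mul]

variable [Group G] [NormedAlgebra ℝ A]

/-- The twirl `∫ ρ(g) x ρ(g)* dg` of an algebra element over a unitary representation. -/
noncomputable def twirl (μ : Measure G) (ρ : G →* unitary A) (x : A) : A :=
  ∫ g, (ρ g : A) * x * star (ρ g : A) ∂μ

lemma commute_twirl [CStarRing A] [TopologicalSpace G] [ContinuousMul G] [BorelSpace G]
    [SecondCountableTopologyEither G A] (μ : Measure G) [IsFiniteMeasure μ]
    [μ.IsMulLeftInvariant] {ρ : G →* unitary A} (hρ : Continuous ρ) (x : A) (h : G) :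
    Commute (ρ h : A) (twirl μ ρ x) := by
  have hint := integrable_unitary_conj μ hρ x
  have hshift (g : G) : (ρ h : A) * (ρ g * x * star (ρ g : A)) =
      ρ (h * g) * x * star (ρ (h * g) : A) * ρ h := by
    simp [mul_assoc]
  rw [Commute, SemiconjBy, twirl, ← integral_const_mul_of_integrable hint]
  simp only [hshift]
  rw [integral_mul_left_eq_self (fun g => (ρ g : A) * x * star (ρ g : A) * ρ h),
    integral_mul_const_of_integrable hint]

end Twirl

section Flip

lemma trace_submatrix_equiv {m n R : Type*} [Fintype m] [Fintype n] [AddCommMonoid R]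
    (M : Matrix m m R) (e : n ≃ m) : (M.submatrix e e).trace = M.trace :=
  e.sum_comp fun i => M i i

/-- The flip operator `v ⊗ w ↦ w ⊗ v`. -/
def flipMatrix (n R : Type*) [DecidableEq n] [Zero R] [One R] : Matrix (n × n) (n × n) R :=
  Equiv.Perm.permMatrix R (Equiv.prodComm n n)

/-- The operator on `(Rᵐ ⊗ Rⁿ) ⊗ (Rᵐ ⊗ Rⁿ)` that flips the two copies of `Rⁿ` and fixes those
of `Rᵐ`. -/
def partialFlipMatrix (m n R : Type*) [DecidableEq m] [DecidableEq n] [MulZeroOneClass R] :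
    Matrix ((m × n) × (m × n)) ((m × n) × (m × n)) R :=
  ((1 : Matrix (m × m) (m × m) R) ⊗ₖ flipMatrix n R).submatrix
    (Equiv.prodProdProdComm m n m n) (Equiv.prodProdProdComm m n m n)

variable {m n R : Type*} [DecidableEq m] [DecidableEq n]

lemma flipMatrix_apply [Zero R] [One R] (p q : n × n) :
    flipMatrix n R p q = if p.swap = q then 1 else 0 := by
  simp [flipMatrix, Equiv.Perm.permMatrix, PEquiv.toMatrix_apply, eq_comm]

lemma flipMatrix_prod [MulZeroOneClass R] :
    flipMatrix (m × n) R = (flipMatrix m R ⊗ₖ flipMatrix n R).submatrix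
      (Equiv.prodProdProdComm m n m n) (Equiv.prodProdProdComm m n m n) := by
  ext p q
  simp only [flipMatrix_apply, submatrix_apply, kronecker_apply, Prod.ext_iff,
    Equiv.prodProdProdComm_apply, Prod.fst_swap, Prod.snd_swap, ite_zero_mul_ite_zero, mul_one]
  congr 1
  grind

variable [Fintype n]

lemma mul_flipMatrix_apply [NonAssocSemiring R] {l : Type*} (M : Matrix l (n × n) R) (p : l)
    (q : n × n) : (M * flipMatrix n R) p q = M p q.swap := by
  simp [flipMatrix, Equiv.Perm.permMatrix, PEquiv.mul_toMatrix_toPEquiv]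

lemma flipMatrix_mul_apply [NonAssocSemiring R] {l : Type*} (M : Matrix (n × n) l R) (p : n × n)
    (q : l) : (flipMatrix n R * M) p q = M p.swap q := by
  simp [flipMatrix, Equiv.Perm.permMatrix, PEquiv.toMatrix_toPEquiv_mul]

lemma flipMatrix_mul_self [NonAssocSemiring R] : flipMatrix n R * flipMatrix n R = 1 := by
  ext p q
  simp [flipMatrix_mul_apply, flipMatrix_apply, Matrix.one_apply]

lemma commute_kronecker_self_flipMatrix [CommSemiring R] (A : Matrix n n R) :
    Commute (A ⊗ₖ A) (flipMatrix n R) := by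
  ext p q
  simp [flipMatrix_mul_apply, mul_flipMatrix_apply, mul_comm]

lemma trace_flipMatrix [NonAssocSemiring R] : (flipMatrix n R).trace = Fintype.card n := by
  simp [trace, flipMatrix_apply, Fintype.sum_prod_type, Prod.ext_iff, ite_and]

lemma trace_kronecker_mul_flipMatrix [CommSemiring R] (A B : Matrix n n R) :
    ((A ⊗ₖ B) * flipMatrix n R).trace = (A * B).trace := by
  simp [trace, mul_flipMatrix_apply, Matrix.mul_apply (M := A), Fintype.sum_prod_type]

variable [Fintype m]

lemma mul_partialFlipMatrix_apply [NonAssocSemiring R] {l : Type*}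
    (M : Matrix l ((m × n) × (m × n)) R) (p : l) (q : (m × n) × (m × n)) :
    (M * partialFlipMatrix m n R) p q = M p ((q.1.1, q.2.2), (q.2.1, q.1.2)) := by
  simp [partialFlipMatrix, Matrix.mul_apply, flipMatrix_apply, Matrix.one_apply,
    Fintype.sum_prod_type, Prod.ext_iff, ite_and]

lemma trace_partialFlipMatrix [Semiring R] :
    (partialFlipMatrix m n R).trace = (Fintype.card m : R) ^ 2 * Fintype.card n := by
  rw [partialFlipMatrix, trace_submatrix_equiv, trace_kronecker, trace_flipMatrix,
    trace_one, Fintype.card_prod, Nat.cast_mul, sq]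

lemma trace_flipMatrix_mul_partialFlipMatrix [CommSemiring R] :
    (flipMatrix (m × n) R * partialFlipMatrix m n R).trace =
      (Fintype.card m : R) * (Fintype.card n : R) ^ 2 := by
  rw [flipMatrix_prod, partialFlipMatrix, submatrix_mul_equiv, ← mul_kronecker_mul,
    flipMatrix_mul_self, mul_one, trace_submatrix_equiv, trace_kronecker,
    trace_flipMatrix, trace_one, Fintype.card_prod, Nat.cast_mul, sq]

end Flip

section Commutant

variable {n : Type*} [Fintype n] [DecidableEq n]

/-- The operators on `ℂⁿ ⊗ ℂⁿ` that commute with `U ⊗ U` for every unitary `U`, i.e. the fixed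
points of the twirl over `U ↦ U ⊗ U`. -/
def IsTwirlInvariant (M : Matrix (n × n) (n × n) ℂ) : Prop :=
  ∀ U ∈ unitaryGroup n ℂ, Commute (U ⊗ₖ U) M

lemma permMatrix_mem_unitaryGroup (π : Equiv.Perm n) :
    π.permMatrix ℂ ∈ unitaryGroup n ℂ := by
  rw [mem_unitaryGroup_iff, star_eq_conjTranspose, conjTranspose_permMatrix,
    ← permMatrix_mul, inv_mul_cancel, permMatrix_one]

lemma diagonal_mem_unitaryGroup {z : n → ℂ} (hz : ∀ i, ‖z i‖ = 1) :
    diagonal z ∈ unitaryGroup n ℂ := by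
  rw [mem_unitaryGroup_iff, star_eq_conjTranspose, diagonal_conjTranspose,
    diagonal_mul_diagonal, ← diagonal_one]
  congr 1 with i
  simp [Complex.mul_conj', hz i]

-- `3/5 + (4/5) i P` is unitary for every self-adjoint involution `P`; here `P` swaps `p` and `q`.
lemma exists_unitary_apply_ne_zero (p q : n) :
    ∃ U ∈ unitaryGroup n ℂ, U p p ≠ 0 ∧ U q p ≠ 0 := by
  let P : Matrix n n ℂ := (Equiv.swap p q).permMatrix ℂ
  have hP : star P = P := by
    simp [P, star_eq_conjTranspose, conjTranspose_permMatrix]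
  have hPP : P * P = 1 := by
    simp [P, ← permMatrix_mul]
  refine ⟨(3 / 5 : ℂ) • 1 + (4 / 5 * Complex.I) • P, ?_, ?_, ?_⟩
  · have hstar : star ((3 / 5 : ℂ) • 1 + (4 / 5 * Complex.I) • P) =
        (3 / 5 : ℂ) • 1 - (4 / 5 * Complex.I) • P := by
      simp [star_smul, hP, sub_eq_add_neg]
    rw [mem_unitaryGroup_iff, hstar]
    simp only [add_mul, mul_sub, smul_mul_smul_comm, one_mul, mul_one, hPP]
    match_scalars
    · linear_combination (-16 / 25) * Complex.I_mul_I
    · ring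
  · by_cases hpq : q = p <;> simp [P, hpq, PEquiv.toMatrix_apply, Complex.ext_iff]
  · by_cases hpq : q = p <;> simp [P, hpq, PEquiv.toMatrix_apply, Complex.ext_iff]

namespace IsTwirlInvariant

variable {M : Matrix (n × n) (n × n) ℂ}

lemma apply_perm (hM : IsTwirlInvariant M) (π : Equiv.Perm n) (i k j l : n) :
    M (π i, π k) (π j, π l) = M (i, k) (j, l) := by
  have hπ : π.permMatrix ℂ ⊗ₖ π.permMatrix ℂ = Equiv.Perm.permMatrix ℂ (π.prodCongr π) := by
    ext p q
    simp only [kroneckerMap_apply, PEquiv.toMatrix_apply, Equiv.toPEquiv_apply, Option.mem_def,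
      Option.some.injEq, mul_ite, mul_one, mul_zero, Equiv.prodCongr_apply, Prod.ext_iff,
      Prod.map_fst, Prod.map_snd, ite_and]
    grind
  have h := congr_fun₂ (hM _ (permMatrix_mem_unitaryGroup π)) (i, k) (π j, π l)
  simpa [hπ, Equiv.Perm.permMatrix, PEquiv.toMatrix_toPEquiv_mul, PEquiv.mul_toMatrix_toPEquiv]
    using h

-- Diagonal unitaries multiply a nonzero entry by a phase that must be `1`. As `Complex.I` has
-- order `4 > 2`, its powers recover the multiplicity of each index in `s(i, k)` and `s(j, l)`.
lemma eq_of_apply_ne_zero (hM : IsTwirlInvariant M) {i k j l : n} (h : M (i, k) (j, l) ≠ 0) :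
    s(i, k) = s(j, l) := by
  let count (p x : n) : ℕ := if x = p then 1 else 0
  have hphase (p : n) : Complex.I ^ (count p i + count p k) =
      Complex.I ^ (count p j + count p l) := by
    have hz := hM _ (diagonal_mem_unitaryGroup (z := fun x => Complex.I ^ count p x) (by simp))
    have hentry := congr_fun₂ hz (i, k) (j, l)
    rw [diagonal_kronecker_diagonal, diagonal_mul, mul_diagonal, mul_comm] at hentry
    simpa only [pow_add] using mul_left_cancel₀ h hentry
  have hle (p x : n) : count p x ≤ 1 := by
    simp only [count]
    split_ifs <;> simp
  have hcount (p : n) : count p i + count p k = count p j + count p l :=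
    Complex.isPrimitiveRoot_I.pow_inj (by linarith [hle p i, hle p k])
      (by linarith [hle p j, hle p l]) (hphase p)
  have hi := hcount i
  have hk := hcount k
  rw [Sym2.eq_iff]
  grind

lemma apply_diag (hM : IsTwirlInvariant M) {p q : n} (hpq : p ≠ q) :
    M (p, p) (p, p) = M (p, q) (p, q) + M (p, q) (q, p) := by
  obtain ⟨U, hU, hp, hq⟩ := exists_unitary_apply_ne_zero p q
  have hrow (i k : n) (h : (i, k) ≠ (p, p)) : M (i, k) (p, p) = 0 := by
    by_contra hne
    have := hM.eq_of_apply_ne_zero hne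
    grind
  have hcol (j l : n) (h₁ : (j, l) ≠ (p, q)) (h₂ : (j, l) ≠ (q, p)) : M (p, q) (j, l) = 0 := by
    by_contra hne
    have := hM.eq_of_apply_ne_zero hne
    grind
  have hentry := congr_fun₂ (hM U hU) (p, q) (p, p)
  rw [Matrix.mul_apply, Matrix.mul_apply, Fintype.sum_eq_single (p, p),
    Fintype.sum_eq_add (p, q) (q, p)] at hentry
  · simp only [kroneckerMap_apply] at hentry
    refine mul_left_cancel₀ (mul_ne_zero hp hq) ?_
    linear_combination hentry
  all_goals grind

theorem exists_eq_smul_one_add_smul_flipMatrix [Nontrivial n] (hM : IsTwirlInvariant M) :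
    ∃ a b : ℂ, M = a • 1 + b • flipMatrix n ℂ := by
  obtain ⟨p, q, hpq⟩ := exists_pair_ne n
  have htrans {i k : n} (hik : i ≠ k) : ∃ π : Equiv.Perm n, π p = i ∧ π q = k :=
    MulAction.is_two_pretransitive_iff.mp (Equiv.Perm.isMultiplyPretransitive n 2) hpq hik
  have ha {i k : n} (hik : i ≠ k) : M (i, k) (i, k) = M (p, q) (p, q) := by
    obtain ⟨π, rfl, rfl⟩ := htrans hik
    exact hM.apply_perm π ..
  have hb {i k : n} (hik : i ≠ k) : M (i, k) (k, i) = M (p, q) (q, p) := by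
    obtain ⟨π, rfl, rfl⟩ := htrans hik
    exact hM.apply_perm π ..
  have hab (i : n) : M (i, i) (i, i) = M (p, q) (p, q) + M (p, q) (q, p) := by
    obtain ⟨r, hr⟩ := exists_ne i
    rw [hM.apply_diag hr.symm, ha hr.symm, hb hr.symm]
  refine ⟨M (p, q) (p, q), M (p, q) (q, p), ?_⟩
  ext ⟨i, k⟩ ⟨j, l⟩
  simp only [Matrix.add_apply, Matrix.smul_apply, Matrix.one_apply, flipMatrix_apply,
    Prod.swap_prod_mk, smul_eq_mul, mul_ite, mul_one, mul_zero]
  by_cases h : s(i, k) = s(j, l)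
  · by_cases hik : i = k <;> obtain ⟨rfl, rfl⟩ | ⟨rfl, rfl⟩ := Sym2.eq_iff.mp h <;> grind
  · have hzero : M (i, k) (j, l) = 0 := by
      by_contra hne
      exact h (hM.eq_of_apply_ne_zero hne)
    grind

end IsTwirlInvariant

end Commutant

section HaarTwirl

variable {n : Type*} [Fintype n] [DecidableEq n]

/-- The representation `U ↦ U ⊗ U` of the unitary group. -/
def kroneckerSquare : unitaryGroup n ℂ →* unitaryGroup (n × n) ℂ where
  toFun U := ⟨U.1 ⊗ₖ U.1, kronecker_mem_unitary U.2 U.2⟩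
  map_one' := Subtype.ext one_kronecker_one
  map_mul' U V := Subtype.ext (mul_kronecker_mul U.1 V.1 U.1 V.1)

lemma continuous_kroneckerSquare : Continuous (kroneckerSquare (n := n)) := by
  refine Continuous.subtype_mk (continuous_matrix fun p q => ?_) _
  have hcoord (i j : n) : Continuous fun U : unitaryGroup n ℂ => U.1 i j :=
    continuous_subtype_val.matrix_elem i j
  exact (hcoord p.1 q.1).mul (hcoord p.2 q.2)

lemma card_sq_sub_one_ne_zero (n : Type*) [Fintype n] [Nontrivial n] :
    (Fintype.card n : ℂ) ^ 2 - 1 ≠ 0 := by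
  have hcard : (1 : ℝ) < Fintype.card n := by exact_mod_cast Fintype.one_lt_card
  exact_mod_cast (by nlinarith : (Fintype.card n : ℝ) ^ 2 - 1 ≠ 0)

open scoped Matrix.Norms.L2Operator

section TraceTwirl

variable {G : Type*} [Group G] [TopologicalSpace G] [MeasurableSpace G] [OpensMeasurableSpace G]
  (μ : Measure G) {ρ : G →* unitaryGroup n ℂ}

lemma trace_twirl_mul [IsFiniteMeasure μ] (hρ : Continuous ρ) (X Y : Matrix n n ℂ) :
    (twirl μ ρ X * Y).trace = ∫ g, ((ρ g).1 * X * star (ρ g).1 * Y).trace ∂μ := by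
  let φ : Matrix n n ℂ →L[ℂ] ℂ := (traceLinearMap n ℂ ℂ ∘ₗ
    LinearMap.mulRight ℂ Y).toContinuousLinearMap
  exact (φ.integral_comp_comm (integrable_unitary_conj μ hρ X)).symm

lemma trace_twirl_mul_of_commute [IsProbabilityMeasure μ] (hρ : Continuous ρ) (X : Matrix n n ℂ)
    {Y : Matrix n n ℂ} (hY : ∀ g, Commute (ρ g).1 Y) :
    (twirl μ ρ X * Y).trace = (X * Y).trace := by
  have h (g : G) : ((ρ g).1 * X * star (ρ g).1 * Y).trace = (X * Y).trace := by
    have hY' : Commute (star (ρ g).1) Y := by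
      simpa [Unitary.coe_star] using hY g⁻¹
    rw [mul_assoc, hY'.eq, ← mul_assoc, trace_mul_comm, mul_assoc, ← mul_assoc,
      Unitary.coe_star_mul_self, one_mul]
  simp [trace_twirl_mul μ hρ, h]

end TraceTwirl

variable [MeasurableSpace (unitaryGroup n ℂ)] [BorelSpace (unitaryGroup n ℂ)]
  (μ : Measure (unitaryGroup n ℂ)) [μ.IsMulLeftInvariant]

lemma isTwirlInvariant_twirl_kroneckerSquare [IsFiniteMeasure μ] (X : Matrix (n × n) (n × n) ℂ) :
    IsTwirlInvariant (twirl μ kroneckerSquare X) :=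
  fun U hU => commute_twirl μ continuous_kroneckerSquare X ⟨U, hU⟩

theorem twirl_kroneckerSquare [IsProbabilityMeasure μ] [Nontrivial n]
    (X : Matrix (n × n) (n × n) ℂ) :
    twirl μ kroneckerSquare X =
      ((Fintype.card n * X.trace - (X * flipMatrix n ℂ).trace) /
          (Fintype.card n * ((Fintype.card n : ℂ) ^ 2 - 1))) • 1 +
        ((Fintype.card n * (X * flipMatrix n ℂ).trace - X.trace) /
          (Fintype.card n * ((Fintype.card n : ℂ) ^ 2 - 1))) • flipMatrix n ℂ := by
  obtain ⟨a, b, hab⟩ :=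
    (isTwirlInvariant_twirl_kroneckerSquare μ X).exists_eq_smul_one_add_smul_flipMatrix
  have htrace := trace_twirl_mul_of_commute μ continuous_kroneckerSquare X
    (fun _ => Commute.one_right _)
  have hflip := trace_twirl_mul_of_commute μ continuous_kroneckerSquare X
    (fun U => commute_kronecker_self_flipMatrix U.1)
  simp only [hab, mul_one, add_mul, Matrix.smul_mul, one_mul, flipMatrix_mul_self,
    trace_add, trace_smul, trace_one, trace_flipMatrix, smul_eq_mul,
    Fintype.card_prod, Nat.cast_mul] at htrace hflip
  have hcard₀ : (Fintype.card n : ℂ) ≠ 0 := Nat.cast_ne_zero.mpr Fintype.card_ne_zero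
  have hcard₁ := card_sq_sub_one_ne_zero n
  rw [hab, ← htrace, ← hflip]
  congr 2 <;> field_simp <;> ring

end HaarTwirl

section PartialTrace

variable {c m n a b R : Type*}

/-- The partial trace `ψ ↦ ψ^C` over the second tensor factor. -/
def partialTraceSnd [Fintype n] [AddCommMonoid R] (ψ : Matrix (m × n) (m × n) R) : Matrix m m R :=
  Matrix.of fun i j => ∑ k, ψ (i, k) (j, k)

/-- The partial trace over the first tensor factor. -/
def partialTraceFst [Fintype m] [AddCommMonoid R] (ψ : Matrix (m × n) (m × n) R) : Matrix n n R :=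
  Matrix.of fun k l => ∑ i, ψ (i, k) (i, l)

/-- The partial trace `ψ ↦ ψ^{CA₂}` over the middle factor of `C ⊗ (A₁ ⊗ A₂)`. -/
def partialTraceMid [Fintype a] [AddCommMonoid R] (ψ : Matrix (c × (a × b)) (c × (a × b)) R) :
    Matrix (c × b) (c × b) R :=
  Matrix.of fun p q => ∑ i, ψ (p.1, (i, p.2)) (q.1, (i, q.2))

/-- The evolution `(1 ⊗ U) ψ (1 ⊗ U)*` of `ψ` under the dynamics `U` of the second factor. -/
def conjSnd [Fintype m] [Fintype n] [DecidableEq m] [NonAssocSemiring R] [Star R]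
    (U : Matrix n n R) (ψ : Matrix (m × n) (m × n) R) : Matrix (m × n) (m × n) R :=
  ((1 : Matrix m m R) ⊗ₖ U) * ψ * ((1 : Matrix m m R) ⊗ₖ U)ᴴ

/-- The operator on two copies of the second factor obtained from `(ψ ⊗ ψ) (F ⊗ 1)`, with `F` the
flip of the two copies of the first factor, by tracing those copies out. It turns purities of
reductions of `ψ` into traces against flips. -/
def crossedBlocks [Fintype m] [NonUnitalNonAssocSemiring R] (ψ : Matrix (m × n) (m × n) R) :
    Matrix (n × n) (n × n) R :=
  ∑ i, ∑ j, ψ.submatrix (Prod.mk i) (Prod.mk j) ⊗ₖ ψ.submatrix (Prod.mk j) (Prod.mk i)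

variable [Fintype m] [Fintype n] [CommSemiring R]

lemma trace_crossedBlocks (ψ : Matrix (m × n) (m × n) R) :
    (crossedBlocks ψ).trace = (partialTraceSnd ψ * partialTraceSnd ψ).trace := by
  simp only [crossedBlocks, trace_sum, trace_kronecker]
  rfl

lemma trace_crossedBlocks_mul_flipMatrix [DecidableEq n] (ψ : Matrix (m × n) (m × n) R) :
    (crossedBlocks ψ * flipMatrix n R).trace = (ψ * ψ).trace := by
  simp only [crossedBlocks, Matrix.sum_mul, trace_sum, trace_kronecker_mul_flipMatrix]
  simp only [trace, diag_apply, Matrix.mul_apply, submatrix_apply, Fintype.sum_prod_type]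
  exact Finset.sum_congr rfl fun i _ => Finset.sum_comm

lemma submatrix_conjSnd [DecidableEq m] [StarRing R] (U : Matrix n n R)
    (ψ : Matrix (m × n) (m × n) R) (i j : m) :
    (conjSnd U ψ).submatrix (Prod.mk i) (Prod.mk j) =
      U * ψ.submatrix (Prod.mk i) (Prod.mk j) * Uᴴ := by
  ext k l
  simp [conjSnd, Matrix.mul_apply, conjTranspose_kronecker, Matrix.one_apply,
    Fintype.sum_prod_type]

lemma crossedBlocks_conjSnd [DecidableEq m] [StarRing R] (U : Matrix n n R)
    (ψ : Matrix (m × n) (m × n) R) :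
    crossedBlocks (conjSnd U ψ) = (U ⊗ₖ U) * crossedBlocks ψ * (U ⊗ₖ U)ᴴ := by
  simp only [crossedBlocks, submatrix_conjSnd, Matrix.mul_sum, Matrix.sum_mul,
    mul_kronecker_mul, conjTranspose_kronecker]

lemma trace_kronecker_mul_partialFlipMatrix [DecidableEq m] [DecidableEq n]
    (A B : Matrix (m × n) (m × n) R) :
    ((A ⊗ₖ B) * partialFlipMatrix m n R).trace =
      (partialTraceFst A * partialTraceFst B).trace := by
  simp only [trace, diag_apply, mul_partialFlipMatrix_apply]
  simp only [Matrix.mul_apply, partialTraceFst, Matrix.of_apply, Fintype.sum_prod_type,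
    Finset.sum_mul_sum]
  rw [Finset.sum_comm]
  refine Finset.sum_congr rfl fun k _ => ?_
  exact (Finset.sum_congr rfl fun i _ => Finset.sum_comm).trans Finset.sum_comm

lemma trace_crossedBlocks_mul_partialFlipMatrix [Fintype c] [Fintype a] [Fintype b]
    [DecidableEq a] [DecidableEq b] (ψ : Matrix (c × (a × b)) (c × (a × b)) R) :
    (crossedBlocks ψ * partialFlipMatrix a b R).trace =
      (partialTraceMid ψ * partialTraceMid ψ).trace := by
  simp only [← trace_crossedBlocks_mul_flipMatrix (partialTraceMid ψ), crossedBlocks,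
    Matrix.sum_mul, trace_sum, trace_kronecker_mul_partialFlipMatrix,
    trace_kronecker_mul_flipMatrix]
  rfl

end PartialTrace

section Decoupling

variable {C A₁ A₂ : Type*} [Fintype C] [DecidableEq C] [Fintype A₁] [DecidableEq A₁]
  [Fintype A₂] [DecidableEq A₂]

theorem stmt8_general [Nontrivial (A₁ × A₂)] (ψ : Matrix (C × (A₁ × A₂)) (C × (A₁ × A₂)) ℂ)
    [MeasurableSpace (unitaryGroup (A₁ × A₂) ℂ)]
    [BorelSpace (unitaryGroup (A₁ × A₂) ℂ)]
    (μ : Measure (unitaryGroup (A₁ × A₂) ℂ)) [μ.IsMulLeftInvariant]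
    [IsProbabilityMeasure μ] :
    ∫ U : unitaryGroup (A₁ × A₂) ℂ,
        (partialTraceMid (conjSnd U.1 ψ) * partialTraceMid (conjSnd U.1 ψ)).trace ∂μ =
      (partialTraceSnd ψ * partialTraceSnd ψ).trace / (Fintype.card A₂ : ℂ) +
        ((Fintype.card A₂ : ℂ) ^ 2 - 1) *
            ((Fintype.card A₁ * Fintype.card A₂ : ℂ) * (ψ * ψ).trace -
              (partialTraceSnd ψ * partialTraceSnd ψ).trace) /
          ((Fintype.card A₂ : ℂ) * ((Fintype.card A₁ * Fintype.card A₂ : ℂ) ^ 2 - 1)) := by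
  have hpurity (U : unitaryGroup (A₁ × A₂) ℂ) :
      (partialTraceMid (conjSnd U.1 ψ) * partialTraceMid (conjSnd U.1 ψ)).trace =
        ((kroneckerSquare U).1 * crossedBlocks ψ * star (kroneckerSquare U).1 *
          partialFlipMatrix A₁ A₂ ℂ).trace := by
    rw [← trace_crossedBlocks_mul_partialFlipMatrix, crossedBlocks_conjSnd]
    rfl
  have hcard₀ : (Fintype.card (A₁ × A₂) : ℂ) ≠ 0 := Nat.cast_ne_zero.mpr Fintype.card_ne_zero
  have hcard₁ := card_sq_sub_one_ne_zero (A₁ × A₂)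
  simp only [Fintype.card_prod, Nat.cast_mul, mul_pow, mul_ne_zero_iff] at hcard₀ hcard₁
  obtain ⟨hA₁, hA₂⟩ := hcard₀
  simp only [hpurity]
  rw [← trace_twirl_mul μ continuous_kroneckerSquare, twirl_kroneckerSquare]
  simp only [add_mul, Matrix.smul_mul, one_mul, trace_add, trace_smul,
    trace_partialFlipMatrix, trace_flipMatrix_mul_partialFlipMatrix, trace_crossedBlocks,
    trace_crossedBlocks_mul_flipMatrix, Fintype.card_prod, Nat.cast_mul, smul_eq_mul]
  field_simp
  ring

end Decoupling

/-- The quantum instance of the paper's Lemma `TheDecouplingPurity`: the Haar-averaged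
purity of `σ(U)^{CA₂}`. -/
theorem stmt8 (dC d₁ d₂ : ℕ) (hdC : 1 ≤ dC) (hd₁ : 1 ≤ d₁) (hd₂ : 1 ≤ d₂)
    (hd : 2 ≤ d₁ * d₂)
    (ψ : Matrix (Fin dC × (Fin d₁ × Fin d₂)) (Fin dC × (Fin d₁ × Fin d₂)) ℂ)
    (hψ : ψ.PosSemidef) (htr : ψ.trace = 1)
    [MeasurableSpace (Matrix.unitaryGroup (Fin d₁ × Fin d₂) ℂ)]
    [BorelSpace (Matrix.unitaryGroup (Fin d₁ × Fin d₂) ℂ)]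
    (μ : Measure (Matrix.unitaryGroup (Fin d₁ × Fin d₂) ℂ))
    [μ.IsHaarMeasure] [IsProbabilityMeasure μ] :
    ∫ U, (sigmaCA2 ψ U * sigmaCA2 ψ U).trace ∂μ
      = (ptraceC ψ * ptraceC ψ).trace / (d₂ : ℂ)
        + ((d₂ : ℂ) ^ 2 - 1) *
            ((d₁ * d₂ : ℂ) * (ψ * ψ).trace - (ptraceC ψ * ptraceC ψ).trace)
          / ((d₂ : ℂ) * ((d₁ * d₂ : ℂ) ^ 2 - 1)) := by
  have : Nontrivial (Fin d₁ × Fin d₂) :=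
    Fintype.one_lt_card_iff_nontrivial.mp (by simpa using Nat.lt_of_succ_le hd)
  exact (stmt8_general ψ μ).trans (by simp only [Fintype.card_fin]; rfl)
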